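/- arXiv:2501.10949 — 2 statements merged into one kernel-verified Lean document; each statement's English description precedes it below -/
import Mathlib

section
/- The map (f,T,g) ↦ Λ_{f,T,g} is upper semi-continuous from 𝓖 = {(f,T,g) : f ∈ 𝓒^1, T ∈ 𝓔^1, g a Lipschitz calibrated sub-action of (f,T)} (topologized as a subspace of 𝓒^1 × 𝓔^1 × 𝓒^0) into the space of nonempty compact subsets of ℝ/ℤ. -/
/-!
Since `g` is a sub-action, the function `φ = g + f - g ∘ T` is at most `β(f,T)`, and calibration
says that this value is attained; so `E_{f,T,g}` is the set of maximizers of `φ`, a description in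
which `β` no longer occurs and no continuity of `β` is needed. The graph of
`(f,T,g) ↦ argmax φ` is closed for uniform convergence. Closedness of the graph is inherited by
`Λ*`, an intersection of preimages of `E`, and then by `Λ`, since images under the iterates of `T`
are projections of closed sets along the compact circle.
-/

open MeasureTheory Topology Filter Set
open scoped UniformConvergence

noncomputable section

/-- The circle `ℝ/ℤ`. -/
abbrev Circle1 : Type := AddCircle (1 : ℝ)

/-- The canonical representative in `[0,1)` of a point of `ℝ/ℤ`. -/
noncomputable def rep (z : Circle1) : ℝ := (AddCircle.equivIco 1 0 z : ℝ)

/-- The circle map induced by a lift `F : ℝ → ℝ`. -/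
noncomputable def cmap (F : ℝ → ℝ) : Circle1 → Circle1 := fun z => ((F (rep z) : ℝ) : Circle1)

/-- The data determining the `C^r` topology: all derivatives of order `≤ r`, viewed in the
space of functions `ℝ → ℝ` with the uniform-convergence topology. -/
noncomputable def crSeq (r : ℕ∞) (f : ℝ → ℝ) : ℕ → (ℝ →ᵤ ℝ) :=
  fun k => UniformFun.ofFun (if (k : ℕ∞) ≤ r then iteratedDeriv k f else 0)

/-- The space `𝓒^r` of `C^r` functions `ℝ/ℤ → ℝ`. -/
def CrFun (r : ℕ∞) : Type := {f : Circle1 → ℝ // ContDiff ℝ r fun x : ℝ => f ↑x}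

/-- The `C^r` topology on `𝓒^r`. -/
noncomputable instance (r : ℕ∞) : TopologicalSpace (CrFun r) :=
  TopologicalSpace.induced (fun f : CrFun r => crSeq r fun x : ℝ => f.1 ↑x) inferInstance

/-- `F : ℝ → ℝ` is a lift of a `C^r` expanding circle map: it is `C^r`, sends `x+1` to
`F x + d` for a fixed integer `d`, and `|(Fⁿ)'| ≥ C λⁿ` for some `C > 0`, `λ > 1`. -/
def ExpandingLift (r : ℕ∞) (F : ℝ → ℝ) : Prop :=
  ContDiff ℝ r F ∧ (∃ d : ℤ, ∀ x : ℝ, F (x + 1) = F x + d) ∧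
    ∃ C > (0 : ℝ), ∃ l > (1 : ℝ), ∀ n : ℕ, 1 ≤ n → ∀ x : ℝ, C * l ^ n ≤ |deriv (F^[n]) x|

/-- The space `𝓔^r` of (lifts of) `C^r` expanding circle maps, with the `C^r` topology. -/
def ExpMap (r : ℕ∞) : Type := {F : ℝ → ℝ // ExpandingLift r F}

noncomputable instance (r : ℕ∞) : TopologicalSpace (ExpMap r) :=
  TopologicalSpace.induced (fun F : ExpMap r => crSeq r F.1) inferInstance

/-- `μ` is a `T`-invariant Borel probability measure. -/
def InvProb (T : Circle1 → Circle1) (μ : Measure Circle1) : Prop :=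
  IsProbabilityMeasure μ ∧ μ.map T = μ

/-- `β(f,T)`, the maximal ergodic average. -/
noncomputable def beta (f : Circle1 → ℝ) (T : Circle1 → Circle1) : ℝ :=
  sSup ((fun μ : Measure Circle1 => ∫ x, f x ∂μ) '' {μ | InvProb T μ})

/-- `μ` is a maximizing measure for `(f,T)`. -/
def IsMaximizing (f : Circle1 → ℝ) (T : Circle1 → Circle1) (μ : Measure Circle1) : Prop :=
  InvProb T μ ∧ ∫ x, f x ∂μ = beta f T

/-- `μ` is a periodic measure: an invariant measure supported on a periodic orbit. -/
def IsPeriodicMeasure (T : Circle1 → Circle1) (μ : Measure Circle1) : Prop :=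
  InvProb T μ ∧ ∃ x : Circle1, ∃ n : ℕ, 0 < n ∧ T^[n] x = x ∧
    μ (Set.range fun k : ℕ => T^[k] x) = 1

/-- `(f,T)` is uniquely maximized by a periodic measure. -/
def UniqMaxPeriodic (f : Circle1 → ℝ) (T : Circle1 → Circle1) : Prop :=
  ∃ μ : Measure Circle1, IsMaximizing f T μ ∧ IsPeriodicMeasure T μ ∧
    ∀ ν : Measure Circle1, IsMaximizing f T ν → ν = μ

/-- A (continuous) sub-action for `(f,T)`. -/
def IsSubaction (f : Circle1 → ℝ) (T : Circle1 → Circle1) (g : Circle1 → ℝ) : Prop :=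
  Continuous g ∧ ∀ x, g x + f x ≤ g (T x) + beta f T

/-- A calibrated sub-action for `(f,T)`. -/
def IsCalibrated (f : Circle1 → ℝ) (T : Circle1 → Circle1) (g : Circle1 → ℝ) : Prop :=
  IsSubaction f T g ∧ ∀ x, ∃ y, T y = x ∧ g y + f y = g x + beta f T

/-- `G_{f,T}`: the set of Lipschitz calibrated sub-actions of `(f,T)`. -/
def Gset (f : Circle1 → ℝ) (T : Circle1 → Circle1) : Set (Circle1 → ℝ) :=
  {g | (∃ K : NNReal, LipschitzWith K g) ∧ IsCalibrated f T g}

/-- The set `E_{f,T,g}`. -/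
def Eset (f : Circle1 → ℝ) (T : Circle1 → Circle1) (g : Circle1 → ℝ) : Set Circle1 :=
  {x | g x + f x = g (T x) + beta f T}

/-- The set `Λ*_{f,T,g}`. -/
def LambdaStar (f : Circle1 → ℝ) (T : Circle1 → Circle1) (g : Circle1 → ℝ) : Set Circle1 :=
  {x | ∀ n : ℕ, T^[n] x ∈ Eset f T g}

/-- The set `Λ_{f,T,g}`. -/
def Lambda (f : Circle1 → ℝ) (T : Circle1 → Circle1) (g : Circle1 → ℝ) : Set Circle1 :=
  ⋂ n : ℕ, T^[n] '' LambdaStar f T g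

/-- The set `K(f,T)`. -/
def Kset (f : Circle1 → ℝ) (T : Circle1 → Circle1) : Set Circle1 :=
  ⋃ g ∈ Gset f T, Lambda f T g

/-- The `(f,T)`-non-wandering set `Ω(f,T)`. -/
def OmegaSet (f : Circle1 → ℝ) (T : Circle1 → Circle1) : Set Circle1 :=
  {x | ∀ ε > (0 : ℝ), ∃ n : ℕ, 1 ≤ n ∧ ∃ z : Circle1, T^[n] z = x ∧ dist z x < ε ∧
    |∑ i ∈ Finset.range n, (f (T^[i] z) - beta f T)| < ε}

/-- `A` is a periodic orbit of `T`. -/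
def IsPeriodicOrbit (T : Circle1 → Circle1) (A : Set Circle1) : Prop :=
  ∃ x : Circle1, (∃ n : ℕ, 0 < n ∧ T^[n] x = x) ∧ A = Set.range fun k : ℕ => T^[k] x

/-- `A` is a `T`-minimal set: a nonempty compact invariant set with no proper nonempty
compact invariant subset. -/
def IsMinimalSet (T : Circle1 → Circle1) (A : Set Circle1) : Prop :=
  A.Nonempty ∧ IsCompact A ∧ T '' A ⊆ A ∧
    ∀ B ⊆ A, B.Nonempty → IsCompact B → T '' B ⊆ B → B = A

/-- The space of `C^r` families of functions on the circle with `q` parameters,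
i.e. maps `(t,x) ↦ f_t(x)` that are jointly `C^r` (the circle variable via a lift). -/
def FamFun (r : ℕ∞) (q : ℕ) : Type :=
  {G : ((Fin q → ℝ) × ℝ) → ℝ // ContDiff ℝ r G ∧ ∀ t x, G (t, x + 1) = G (t, x)}

noncomputable def famSeq (r : ℕ∞) (q : ℕ) (G : ((Fin q → ℝ) × ℝ) → ℝ) :
    (k : ℕ) → (((Fin q → ℝ) × ℝ) →ᵤ (((Fin q → ℝ) × ℝ) [×k]→L[ℝ] ℝ)) :=
  fun k => UniformFun.ofFun (if (k : ℕ∞) ≤ r then iteratedFDeriv ℝ k G else 0)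

/-- The `C^r` topology on the space of `C^r` families. -/
noncomputable instance (r : ℕ∞) (q : ℕ) : TopologicalSpace (FamFun r q) :=
  TopologicalSpace.induced (fun G : FamFun r q => famSeq r q G.1) inferInstance

/-- The member `f_t : ℝ/ℤ → ℝ` of a family, at the parameter `t`. -/
noncomputable def famMem {r : ℕ∞} {q : ℕ} (G : FamFun r q) (t : Fin q → ℝ) : Circle1 → ℝ :=
  fun z => G.1 (t, rep z)

/-- The product `m_∞` over `ℕ` of Lebesgue measure on `[0,1]`, realised as the pushforward of
the Haar probability measure of the compact group `(ℝ/ℤ)^ℕ` under the coordinatewise choice of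
representatives in `[0,1)`. -/
noncomputable def mInfty : Measure (ℕ → ℝ) :=
  Measure.map (fun (t : ℕ → Circle1) (n : ℕ) => rep (t n))
    (MeasureTheory.Measure.addHaarMeasure (⊤ : TopologicalSpace.PositiveCompacts (ℕ → Circle1)))

/-- `S` is an `N`-dimensionally shy subset of a normed real vector space `V`. -/
def NDimShy {V : Type*} [NormedAddCommGroup V] [NormedSpace ℝ V] (N : ℕ) (S : Set V) : Prop :=
  ∃ φ : Fin N → V, ∀ f : V,
    volume {t : Fin N → ℝ | (∀ i, t i ∈ Set.Icc (0 : ℝ) 1) ∧ f + ∑ i, t i • φ i ∈ S} = 0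

/-- `S` is a finite dimensionally shy subset of a normed real vector space `V`. -/
def FinDimShy {V : Type*} [NormedAddCommGroup V] [NormedSpace ℝ V] (S : Set V) : Prop :=
  ∃ N : ℕ, 0 < N ∧ NDimShy N S

/-- `S` is a shy subset of `V`: there are a compactly supported Borel probability measure `μ`
on `V` and a Borel set `S̃ ⊇ S` all of whose translates are `μ`-null. -/
def IsShy {V : Type*} [NormedAddCommGroup V] [NormedSpace ℝ V] (S : Set V) : Prop :=
  letI : MeasurableSpace V := borel V
  ∃ μ : Measure V, μ Set.univ = 1 ∧ (∃ K : Set V, IsCompact K ∧ μ K = 1) ∧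
    ∃ St : Set V, MeasurableSet St ∧ S ⊆ St ∧
      ∀ v : V, μ ((fun x => x + v) ⁻¹' St) = 0

/-- `S` is a prevalent subset of `V`. -/
def IsPrevalent {V : Type*} [NormedAddCommGroup V] [NormedSpace ℝ V] (S : Set V) : Prop :=
  IsShy Sᶜ

/-- `F` is the (normalized) lift of an orientation-preserving real analytic expanding circle
map of degree `d` fixing `π(0)`. -/
def AnalyticExpandingLift (F : ℝ → ℝ) (d : ℕ) : Prop :=
  (∀ x : ℝ, AnalyticAt ℝ F x) ∧ (∀ x : ℝ, F (x + 1) = F x + d) ∧ StrictMono F ∧ F 0 = 0 ∧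
    2 ≤ d ∧ ∃ C > (0 : ℝ), ∃ l > (1 : ℝ), ∀ n : ℕ, 1 ≤ n → ∀ x : ℝ, C * l ^ n ≤ |deriv (F^[n]) x|

/-- The inverse branches `τ_{i,n} = τ_{i_n} ∘ ⋯ ∘ τ_{i_1}`, where `τ = F⁻¹` and
`τ_i(x) = τ(x+i)`; the word `i` is indexed from `0`, so `i 0` is the first letter `i_1`. -/
noncomputable def tauIter (F : ℝ → ℝ) {d : ℕ} (i : ℕ → Fin d) : ℕ → ℝ → ℝ
  | 0, x => x
  | n + 1, x => Function.invFun F (tauIter F i n x + ((i n : ℕ) : ℝ))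

/-- The function `h^f_i` associated to an infinite word `i`. -/
noncomputable def hSum (F : ℝ → ℝ) {d : ℕ} (i : ℕ → Fin d) (f : Circle1 → ℝ) : ℝ → ℝ :=
  fun x => ∑' n : ℕ,
    (f ((tauIter F i (n + 1) x : ℝ) : Circle1) - f ((tauIter F i (n + 1) 0 : ℝ) : Circle1))

/-- The function `h^f_i` associated to a finite word of length `m` (the first `m` letters
of `i`). -/
noncomputable def hSumFin (F : ℝ → ℝ) {d : ℕ} (i : ℕ → Fin d) (m : ℕ) (f : Circle1 → ℝ) :
    ℝ → ℝ :=
  fun x => ∑ n ∈ Finset.range m,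
    (f ((tauIter F i (n + 1) x : ℝ) : Circle1) - f ((tauIter F i (n + 1) 0 : ℝ) : Circle1))

/-- `i ∈ CL(x,K)`: all backward images of `x` along the word `i` lie over `K`. -/
def WordIn (F : ℝ → ℝ) {d : ℕ} (i : ℕ → Fin d) (x : ℝ) (K : Set Circle1) : Prop :=
  ∀ n : ℕ, 1 ≤ n → ((tauIter F i n x : ℝ) : Circle1) ∈ K

/-- `x` (a real, lying over `K`) is an `f`-supercritical value of `K`. -/
def IsSupercriticalValue (F : ℝ → ℝ) (d : ℕ) (f : Circle1 → ℝ) (K : Set Circle1) (x : ℝ) :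
    Prop :=
  ((x : ℝ) : Circle1) ∈ K ∧ ∃ i j : ℕ → Fin d, WordIn F i x K ∧ WordIn F j x K ∧ i 0 ≠ j 0 ∧
    deriv (hSum F i f) x = deriv (hSum F j f) x

/-- `x` is a critical value of `T|K`. -/
def IsCriticalValue (T : Circle1 → Circle1) (K : Set Circle1) (x : Circle1) : Prop :=
  x ∈ K ∧ ∃ y z, y ∈ K ∧ z ∈ K ∧ y ≠ z ∧ T y = x ∧ T z = x

/-- A critical value `x` of `T|K` is regular: on each side of `x` there is a continuous
inverse branch of `T` selecting the unique preimage in `K`. -/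
def IsRegularCriticalValue (T : Circle1 → Circle1) (K : Set Circle1) (x : Circle1) : Prop :=
  ∃ U : Set Circle1, U ∈ 𝓝 x ∧ IsConnected U ∧
    ∀ b ∈ U \ {x}, ∃ s : Circle1 → Circle1,
      ContinuousOn s (connectedComponentIn (U \ {x}) b) ∧
      (∀ y ∈ connectedComponentIn (U \ {x}) b, T (s y) = y) ∧
      (∀ y ∈ K ∩ connectedComponentIn (U \ {x}) b, T ⁻¹' {y} ∩ K = {s y})

/-- `T|K` is Sturmian-like: every critical value is regular. -/
def SturmianLike (T : Circle1 → Circle1) (K : Set Circle1) : Prop :=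
  ∀ x, IsCriticalValue T K x → IsRegularCriticalValue T K x

/-- `f : ℝ/ℤ → ℝ` is a trigonometric polynomial. -/
def IsTrigPoly (f : Circle1 → ℝ) : Prop :=
  ∃ m : ℕ, ∃ a b : ℕ → ℝ, ∀ x : ℝ,
    f ↑x = a 0 + ∑ k ∈ Finset.range m,
      (a (k + 1) * Real.cos (2 * Real.pi * (k + 1) * x) +
        b (k + 1) * Real.sin (2 * Real.pi * (k + 1) * x))

end

section Dynamics

variable {X : Type*}

/-- The survivor set of `E` under `T`: the points whose whole forward orbit stays in `E`. It turns
`E_{f,T,g}` into `Λ*_{f,T,g}`. -/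
def survivorSet (T : X → X) (E : Set X) : Set X :=
  ⋂ n : ℕ, T^[n] ⁻¹' E

/-- The eventual image of `A` under `T`: the points with a preimage in `A` under every iterate
of `T`. It turns `Λ*_{f,T,g}` into `Λ_{f,T,g}`. -/
def eventualImage (T : X → X) (A : Set X) : Set X :=
  ⋂ n : ℕ, T^[n] '' A

/-- The function `f + g - g ∘ T`, cohomologous to `f` through the transfer function `g`. -/
def normalForm (f : X → ℝ) (T : X → X) (g : X → ℝ) (x : X) : ℝ :=
  g x + f x - g (T x)

/-- The set of points at which `φ` attains its maximum. -/
def argmax {β : Type*} [Preorder β] (φ : X → β) : Set X :=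
  {x | IsMaxOn φ univ x}

/-- The construction of `Λ_{f,T,g}` with the maximizers of `g + f - g ∘ T` in the place of
`E_{f,T,g}`; it does not involve `β(f,T)`. -/
def argmaxCore (f : X → ℝ) (T : X → X) (g : X → ℝ) : Set X :=
  eventualImage T (survivorSet T (argmax (normalForm f T g)))

lemma mem_argmax {β : Type*} [Preorder β] {φ : X → β} {x : X} :
    x ∈ argmax φ ↔ ∀ y, φ y ≤ φ x :=
  isMaxOn_univ_iff

lemma survivorSet_mono (T : X → X) : Monotone (survivorSet T) :=
  fun _ _ hE => iInter_mono fun _ => preimage_mono hE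

lemma eventualImage_mono (T : X → X) : Monotone (eventualImage T) :=
  fun _ _ hA => iInter_mono fun _ => image_mono hA

end Dynamics

section ClosedGraph

variable {Z X : Type*} [TopologicalSpace Z] [TopologicalSpace X]

/-- The set-valued map `A` has a closed graph. For a compact target this is upper semi-continuity
with closed values. -/
def HasClosedGraph (A : Z → Set X) : Prop :=
  IsClosed {p : Z × X | p.2 ∈ A p.1}

lemma HasClosedGraph.mem_of_tendsto {A : Z → Set X} (hA : HasClosedGraph A) {ι : Type*}
    {l : Filter ι} [l.NeBot] {z : ι → Z} {z₀ : Z} {x : ι → X} {x₀ : X} (hz : Tendsto z l (𝓝 z₀))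
    (hx : Tendsto x l (𝓝 x₀)) (hmem : ∀ i, x i ∈ A (z i)) : x₀ ∈ A z₀ :=
  IsClosed.mem_of_tendsto (s := {p : Z × X | p.2 ∈ A p.1}) hA (hz.prodMk_nhds hx) (.of_forall hmem)

lemma HasClosedGraph.iInter {κ : Sort*} {A : κ → Z → Set X} (hA : ∀ k, HasClosedGraph (A k)) :
    HasClosedGraph fun z => ⋂ k, A k z := by
  simp only [HasClosedGraph, mem_iInter, ofPred_forall]
  exact isClosed_iInter hA

lemma HasClosedGraph.preimage {Y : Type*} [TopologicalSpace Y] {A : Z → Set Y}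
    (hA : HasClosedGraph A) {F : Z → X → Y} (hF : Continuous (Function.uncurry F)) :
    HasClosedGraph fun z => F z ⁻¹' A z :=
  IsClosed.preimage (continuous_fst.prodMk hF) hA

lemma HasClosedGraph.image {Y : Type*} [TopologicalSpace Y] [CompactSpace X] [T2Space Y]
    {A : Z → Set X} (hA : HasClosedGraph A) {F : Z → X → Y}
    (hF : Continuous (Function.uncurry F)) : HasClosedGraph fun z => F z '' A z := by
  have hmem : IsClosed {q : (Z × Y) × X | q.2 ∈ A q.1.1} :=
    IsClosed.preimage (f := fun q : (Z × Y) × X => (q.1.1, q.2)) (by fun_prop) hA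
  have heq : IsClosed {q : (Z × Y) × X | F q.1.1 q.2 = q.1.2} :=
    isClosed_eq (by fun_prop) (by fun_prop)
  have hproj : {p : Z × Y | p.2 ∈ F p.1 '' A p.1} =
      Prod.fst '' ({q : (Z × Y) × X | q.2 ∈ A q.1.1} ∩ {q | F q.1.1 q.2 = q.1.2}) := by
    ext p
    simp
  rw [HasClosedGraph, hproj]
  exact isClosedMap_fst_of_compactSpace _ (hmem.inter heq)

lemma continuous_uncurry_iterate {T : Z → X → X} (hT : Continuous (Function.uncurry T)) (n : ℕ) :
    Continuous (Function.uncurry fun z => (T z)^[n]) := by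
  induction n with
  | zero => exact continuous_snd
  | succ n ih =>
    simp only [Function.iterate_succ']
    exact hT.comp (continuous_fst.prodMk ih)

lemma HasClosedGraph.survivorSet {T : Z → X → X} {E : Z → Set X} (hE : HasClosedGraph E)
    (hT : Continuous (Function.uncurry T)) :
    HasClosedGraph fun z => survivorSet (T z) (E z) :=
  .iInter fun n => hE.preimage (continuous_uncurry_iterate hT n)

lemma HasClosedGraph.eventualImage [CompactSpace X] [T2Space X] {T : Z → X → X} {A : Z → Set X}
    (hA : HasClosedGraph A) (hT : Continuous (Function.uncurry T)) :
    HasClosedGraph fun z => eventualImage (T z) (A z) :=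
  .iInter fun n => hA.image (continuous_uncurry_iterate hT n)

lemma hasClosedGraph_argmax {β : Type*} [TopologicalSpace β] [Preorder β]
    [OrderClosedTopology β] {φ : Z → X → β} (hφ : Continuous (Function.uncurry φ)) :
    HasClosedGraph fun z => argmax (φ z) := by
  simp only [HasClosedGraph, mem_argmax, ofPred_forall]
  exact isClosed_iInter fun y => isClosed_le (hφ.comp (continuous_fst.prodMk continuous_const)) hφ

lemma hasClosedGraph_argmaxCore [CompactSpace X] [T2Space X] {f g : Z → X → ℝ} {T : Z → X → X}
    (hf : Continuous (Function.uncurry f)) (hT : Continuous (Function.uncurry T))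
    (hg : Continuous (Function.uncurry g)) :
    HasClosedGraph fun z => argmaxCore (f z) (T z) (g z) := by
  have hφ : Continuous (Function.uncurry fun z => normalForm (f z) (T z) (g z)) :=
    (hg.add hf).sub (hg.comp (continuous_fst.prodMk hT))
  exact ((hasClosedGraph_argmax hφ).survivorSet hT).eventualImage hT

end ClosedGraph

section Subaction

variable {f g : Circle1 → ℝ} {T : Circle1 → Circle1}

lemma mem_Eset_iff_normalForm_eq {x : Circle1} :
    x ∈ Eset f T g ↔ normalForm f T g x = beta f T :=
  sub_eq_iff_eq_add'.symm

lemma IsSubaction.normalForm_le (h : IsSubaction f T g) (x : Circle1) :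
    normalForm f T g x ≤ beta f T :=
  sub_le_iff_le_add'.2 (h.2 x)

lemma IsSubaction.Eset_subset_argmax (h : IsSubaction f T g) :
    Eset f T g ⊆ argmax (normalForm f T g) :=
  fun _ hx y _ => (h.normalForm_le y).trans_eq (mem_Eset_iff_normalForm_eq.1 hx).symm

lemma IsSubaction.Eset_eq_argmax (h : IsSubaction f T g) (hE : (Eset f T g).Nonempty) :
    Eset f T g = argmax (normalForm f T g) := by
  obtain ⟨y, hy⟩ := hE
  refine h.Eset_subset_argmax.antisymm fun x hx => ?_
  refine mem_Eset_iff_normalForm_eq.2 ((h.normalForm_le x).antisymm ?_)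
  calc beta f T = normalForm f T g y := (mem_Eset_iff_normalForm_eq.1 hy).symm
    _ ≤ normalForm f T g x := mem_argmax.1 hx y

lemma Lambda_eq_eventualImage_survivorSet :
    Lambda f T g = eventualImage T (survivorSet T (Eset f T g)) := by
  have hstar : LambdaStar f T g = survivorSet T (Eset f T g) := ofPred_forall _
  rw [Lambda, hstar, eventualImage]

lemma IsSubaction.Lambda_subset_argmaxCore (h : IsSubaction f T g) :
    Lambda f T g ⊆ argmaxCore f T g :=
  Lambda_eq_eventualImage_survivorSet.trans_subset
    (eventualImage_mono T (survivorSet_mono T h.Eset_subset_argmax))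

lemma IsSubaction.Lambda_eq_argmaxCore (h : IsSubaction f T g) (hE : (Eset f T g).Nonempty) :
    Lambda f T g = argmaxCore f T g := by
  rw [Lambda_eq_eventualImage_survivorSet, h.Eset_eq_argmax hE, argmaxCore]

lemma IsCalibrated.Eset_nonempty (h : IsCalibrated f T g) : (Eset f T g).Nonempty := by
  obtain ⟨y, hTy, hy⟩ := h.2 0
  exact ⟨y, by rwa [mem_Eset_iff_normalForm_eq, normalForm, hTy, sub_eq_iff_eq_add']⟩

end Subaction

section Circle

lemma coe_rep (z : Circle1) : (rep z : Circle1) = z :=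
  AddCircle.coe_equivIco

lemma cmap_coe {F : ℝ → ℝ} (hF : ∃ d : ℤ, ∀ x, F (x + 1) = F x + d) (x : ℝ) :
    cmap F x = F x := by
  obtain ⟨d, hd⟩ := hF
  have hper : Function.Periodic (fun t : ℝ => (F t : Circle1)) 1 := fun t => by simp [hd]
  exact congrArg hper.lift (coe_rep x)

lemma continuous_cmap {F : ℝ → ℝ} (hF : Continuous F) (hd : ∃ d : ℤ, ∀ x, F (x + 1) = F x + d) :
    Continuous (cmap F) := by
  have hlift : Continuous fun x : ℝ => cmap F x := by
    simp only [cmap_coe hd]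
    exact (AddCircle.continuous_mk' 1).comp hF
  exact (QuotientAddGroup.isQuotientMap_mk _).continuous_iff.2 hlift

lemma uniformContinuous_coe_circle : UniformContinuous ((↑) : ℝ → Circle1) :=
  uniformContinuous_addMonoidHom_of_continuous
    (f := QuotientAddGroup.mk' (AddSubgroup.zmultiples (1 : ℝ))) (AddCircle.continuous_mk' 1)

lemma tendstoUniformly_of_tendsto_crSeq {ι : Type*} {p : Filter ι} {r : ℕ∞} {F : ι → ℝ → ℝ}
    {G : ℝ → ℝ} (h : Tendsto (fun i => crSeq r (F i)) p (𝓝 (crSeq r G))) :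
    TendstoUniformly F G p := by
  have hzero := UniformFun.tendsto_iff_tendstoUniformly.1 (tendsto_pi_nhds.1 h 0)
  simpa [crSeq, Function.comp_def] using hzero

/-- The continuous function underlying an element of `𝓒^r`. -/
def CrFun.toContinuousMap {r : ℕ∞} (f : CrFun r) : C(Circle1, ℝ) where
  toFun := f.1
  continuous_toFun := (QuotientAddGroup.isQuotientMap_mk _).continuous_iff.2 f.2.continuous

/-- The continuous circle map underlying an element of `𝓔^r`, which is given by a lift. -/
noncomputable def ExpMap.toContinuousMap {r : ℕ∞} (F : ExpMap r) : C(Circle1, Circle1) where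
  toFun := cmap F.1
  continuous_toFun := continuous_cmap F.2.1.continuous F.2.2.1

lemma CrFun.continuous_toContinuousMap {r : ℕ∞} :
    Continuous (CrFun.toContinuousMap : CrFun r → C(Circle1, ℝ)) := by
  refine continuous_iff_continuousAt.2 fun f => ContinuousMap.tendsto_iff_tendstoUniformly.2 ?_
  have h := (tendstoUniformly_of_tendsto_crSeq (continuous_induced_dom.tendsto f)).comp rep
  simp only [Function.comp_def, coe_rep] at h
  exact h

lemma ExpMap.continuous_toContinuousMap {r : ℕ∞} :
    Continuous (ExpMap.toContinuousMap : ExpMap r → C(Circle1, Circle1)) := by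
  refine continuous_iff_continuousAt.2 fun F => ContinuousMap.tendsto_iff_tendstoUniformly.2 ?_
  have h := tendstoUniformly_of_tendsto_crSeq (continuous_induced_dom.tendsto F)
  exact uniformContinuous_coe_circle.comp_tendstoUniformly (h.comp rep)

end Circle

theorem lambda_usc_general {ι : Type*} {p : Filter ι} [p.NeBot]
    {f g : ι → C(Circle1, ℝ)} {T : ι → C(Circle1, Circle1)}
    {f₀ g₀ : C(Circle1, ℝ)} {T₀ : C(Circle1, Circle1)}
    (hf : Tendsto f p (𝓝 f₀)) (hT : Tendsto T p (𝓝 T₀)) (hg : Tendsto g p (𝓝 g₀))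
    (hsub : ∀ i, IsSubaction (f i) (T i) (g i)) (hsub₀ : IsSubaction f₀ T₀ g₀)
    (hE₀ : (Eset f₀ T₀ g₀).Nonempty) {x : ι → Circle1} {x₀ : Circle1}
    (hx : ∀ i, x i ∈ Lambda (f i) (T i) (g i)) (hx₀ : Tendsto x p (𝓝 x₀)) :
    x₀ ∈ Lambda f₀ T₀ g₀ := by
  have hclosed := hasClosedGraph_argmaxCore
    (Z := C(Circle1, ℝ) × C(Circle1, Circle1) × C(Circle1, ℝ))
    (f := fun F => F.1) (T := fun F => F.2.1) (g := fun F => F.2.2)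
    (by fun_prop) (by fun_prop) (by fun_prop)
  rw [hsub₀.Lambda_eq_argmaxCore hE₀]
  exact hclosed.mem_of_tendsto (z := fun i => (f i, T i, g i)) (z₀ := (f₀, T₀, g₀))
    (hf.prodMk_nhds (hT.prodMk_nhds hg)) hx₀ fun i => (hsub i).Lambda_subset_argmaxCore (hx i)

/-- Proposition 2.1(i): the map `(f,T,g) ↦ Λ_{f,T,g}` is upper semi-continuous on `𝓖`. -/
theorem lambda_usc
    (seq : ℕ → CrFun 1 × ExpMap 1 × C(Circle1, ℝ))
    (lim : CrFun 1 × ExpMap 1 × C(Circle1, ℝ))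
    (hseq : ∀ n, ((seq n).2.2 : Circle1 → ℝ) ∈ Gset (seq n).1.1 (cmap (seq n).2.1.1))
    (hlim : (lim.2.2 : Circle1 → ℝ) ∈ Gset lim.1.1 (cmap lim.2.1.1))
    (hconv : Tendsto seq atTop (𝓝 lim))
    (x : ℕ → Circle1) (x0 : Circle1)
    (hx : ∀ n, x n ∈ Lambda (seq n).1.1 (cmap (seq n).2.1.1) ((seq n).2.2 : Circle1 → ℝ))
    (hxc : Tendsto x atTop (𝓝 x0)) :
    x0 ∈ Lambda lim.1.1 (cmap lim.2.1.1) (lim.2.2 : Circle1 → ℝ) :=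
  lambda_usc_general ((CrFun.continuous_toContinuousMap.tendsto _).comp hconv.fst_nhds)
    ((ExpMap.continuous_toContinuousMap.tendsto _).comp hconv.snd_nhds.fst_nhds)
    hconv.snd_nhds.snd_nhds (fun n => (hseq n).2.1) hlim.2.1 hlim.2.Eset_nonempty hx hxc
end

section
/- The map (f,T) ↦ K(f,T) is upper semi-continuous from 𝓒^1 × 𝓔^1 into the space of nonempty compact subsets of ℝ/ℤ. -/
/-! If an iterate of `T` contracts backwards, following a calibrated backward orbit from `x` and
shadowing it from `y` bounds the Lipschitz constant of every Lipschitz calibrated sub-action by a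
quantity depending only on the contraction rate and the Lipschitz constants of `f` and `T`. Near a
given `(f, T)` in the `C^1` topology all these quantities are uniform, so all Lipschitz calibrated
sub-actions are Lipschitz with one and the same constant `C`.

Replace `β(f, T)` by a free constant `b`. Being calibrated with constant `b`, and having a point in
the corresponding `Λ`, are then closed conditions: the existence of preimages is a projection along
the compact circle. After normalising the sub-action at a base point, the pairs `(b, g)` range over
a compact set by Arzelà–Ascoli, and projecting this set out shows that the contribution of
`C`-Lipschitz sub-actions to `K(f, T)` has closed graph. Finally, `b` was free in appearance only:
the averages of `f` along calibrated backward orbits converge to `b`, so a limit of empirical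
measures is an invariant measure with integral `b`, whence `b = β(f, T)`.
-/

open MeasureTheory Topology Filter Set
open scoped UniformConvergence

open scoped NNReal ENNReal

noncomputable section

section CalibratedEquation

variable {X : Type*} {f : X → ℝ} {T : X → X} {b : ℝ} {g : X → ℝ}

/-- `g` is a calibrated sub-action of `(f, T)` with an arbitrary constant `b` in place of
`β(f, T)`, on an arbitrary space and without any regularity of `g`. Unlike `IsCalibrated`, this is
a closed condition on `(f, T, b, g)`. -/
structure IsCalibratedWith (f : X → ℝ) (T : X → X) (b : ℝ) (g : X → ℝ) : Prop where
  le : ∀ x, g x + f x ≤ g (T x) + b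
  exists_preimage : ∀ x, ∃ y, T y = x ∧ g y + f y = g x + b

/-- The set `Λ_{f,T,g}` with an arbitrary constant `b` in place of `β(f, T)`: the points having, for
every `n`, an `n`-th preimage along whose whole forward orbit the sub-action inequality is an
equality. -/
def calibratedCore (f : X → ℝ) (T : X → X) (b : ℝ) (g : X → ℝ) : Set X :=
  ⋂ n : ℕ, T^[n] '' {x | ∀ m : ℕ, g (T^[m] x) + f (T^[m] x) = g (T (T^[m] x)) + b}

/-- The part of `K(f, T)` coming from `C`-Lipschitz calibrated sub-actions. The constant `b` is left
free: by `IsCalibratedWith.beta_eq` it can only be `β(f, T)`. -/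
def lipschitzCore [PseudoMetricSpace X] (C : ℝ≥0) (f : X → ℝ) (T : X → X) : Set X :=
  {x | ∃ b g, LipschitzWith C g ∧ IsCalibratedWith f T b g ∧ x ∈ calibratedCore f T b g}

theorem IsCalibratedWith.sub_const (h : IsCalibratedWith f T b g) (c : ℝ) :
    IsCalibratedWith f T b fun x => g x - c where
  le x := by linarith [h.le x]
  exists_preimage x := by
    obtain ⟨y, hyx, hy⟩ := h.exists_preimage x
    exact ⟨y, hyx, by linarith⟩

theorem calibratedCore_sub_const (f : X → ℝ) (T : X → X) (b : ℝ) (g : X → ℝ) (c : ℝ) :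
    calibratedCore f T b (fun x => g x - c) = calibratedCore f T b g := by
  simp only [calibratedCore, sub_add_eq_add_sub, sub_left_inj]

theorem IsCalibratedWith.iterate (h : IsCalibratedWith f T b g) (N : ℕ) :
    IsCalibratedWith (birkhoffSum T f N) T^[N] (N * b) g := by
  induction N with
  | zero => exact ⟨by simp, by simp⟩
  | succ N ih =>
    refine ⟨fun x => ?_, fun x => ?_⟩
    · have hle := h.le (T^[N] x)
      rw [← Function.iterate_succ_apply' T] at hle
      rw [birkhoffSum_succ]
      push_cast
      linarith [ih.le x]
    · obtain ⟨z, rfl, hz⟩ := h.exists_preimage x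
      obtain ⟨y, rfl, hy⟩ := ih.exists_preimage z
      refine ⟨y, Function.iterate_succ_apply' T N y, ?_⟩
      rw [birkhoffSum_succ]
      push_cast
      linarith

theorem IsCalibratedWith.abs_le_norm [TopologicalSpace X] [CompactSpace X] [Nonempty X]
    {f g : C(X, ℝ)} (h : IsCalibratedWith f T b g) : |b| ≤ ‖f‖ := by
  obtain ⟨x, hx⟩ := g.continuous.exists_forall_ge_of_hasCompactSupport (.of_compactSpace g)
  obtain ⟨y, -, hy⟩ := h.exists_preimage x
  exact abs_le.2 ⟨by linarith [h.le x, hx (T x), f.neg_norm_le_apply x],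
    by linarith [hx y, f.apply_le_norm y]⟩

end CalibratedEquation

section LipschitzEstimate

variable {X : Type*} [PseudoMetricSpace X] {f : X → ℝ} {T : X → X} {b : ℝ} {g : X → ℝ}
  {K L M θ : ℝ≥0}

/-- Every backward step of `S` can be shadowed from a nearby end point with contraction rate `θ`;
this is the only consequence of expansion that the Lipschitz estimate needs. -/
def BackwardContracting (θ : ℝ≥0) (S : X → X) : Prop :=
  ∀ x y, ∃ y', S y' = y ∧ dist x y' ≤ θ * dist (S x) y

theorem IsCalibratedWith.lipschitzWith_mul_add (h : IsCalibratedWith f T b g)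
    (hT : BackwardContracting θ T) (hf : LipschitzWith L f) (hg : LipschitzWith K g) :
    LipschitzWith (θ * (L + K)) g := by
  refine LipschitzWith.of_le_add_mul _ fun x y => ?_
  obtain ⟨x', rfl, hx'⟩ := h.exists_preimage x
  obtain ⟨y', rfl, hy'⟩ := hT x' y
  have hgfy := h.le y'
  have hg' := hg.le_add_mul x' y'
  have hf' := hf.le_add_mul x' y'
  calc g (T x') ≤ g (T y') + (L + K) * dist x' y' := by linarith
    _ ≤ g (T y') + (L + K) * (θ * dist (T x') (T y')) := by gcongr
    _ = g (T y') + ↑(θ * (L + K)) * dist (T x') (T y') := by push_cast; ring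

theorem IsCalibratedWith.lipschitzWith_of_backwardContracting (h : IsCalibratedWith f T b g)
    (hθ : θ < 1) (hT : BackwardContracting θ T) (hf : LipschitzWith L f) (hg : LipschitzWith K g) :
    LipschitzWith (θ * L / (1 - θ)) g := by
  have hθ' : 1 - θ ≠ 0 := (tsub_pos_of_lt hθ).ne'
  have hiter (j : ℕ) : LipschitzWith (θ * L / (1 - θ) + θ ^ j * K) g := by
    induction j with
    | zero => exact hg.weaken (by simp)
    | succ j ih =>
      refine (h.lipschitzWith_mul_add hT hf ih).weaken (le_of_eq ?_)
      rw [pow_succ']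
      field_simp
      rw [← NNReal.coe_inj]
      push_cast [hθ.le]
      ring
  have hlim : Tendsto (fun j => θ * L / (1 - θ) + θ ^ j * K) atTop (𝓝 (θ * L / (1 - θ))) := by
    simpa using ((NNReal.tendsto_pow_atTop_nhds_zero_of_lt_one hθ).mul_const K).const_add
      (θ * L / (1 - θ))
  refine LipschitzWith.of_dist_le_mul fun x y => ?_
  exact ge_of_tendsto' ((NNReal.tendsto_coe.2 hlim).mul_const _) fun j => (hiter j).dist_le_mul x y

theorem lipschitzWith_birkhoffSum (hf : LipschitzWith L f) (hT : LipschitzWith M T) (N : ℕ) :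
    LipschitzWith (∑ k ∈ Finset.range N, L * M ^ k) (birkhoffSum T f N) := by
  refine LipschitzWith.of_dist_le_mul fun x y => ?_
  push_cast
  rw [Finset.sum_mul]
  refine (dist_birkhoffSum_birkhoffSum_le T f N x y).trans (Finset.sum_le_sum fun k _ => ?_)
  simpa using (hf.comp (hT.iterate k)).dist_le_mul x y

theorem lipschitzCore_subset {N : ℕ} (hf : LipschitzWith L f) (hT : LipschitzWith M T)
    (hθ : θ < 1) (hTN : BackwardContracting θ T^[N]) :
    lipschitzCore K f T ⊆
      lipschitzCore (θ * (∑ k ∈ Finset.range N, L * M ^ k) / (1 - θ)) f T := by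
  rintro x ⟨b, g, hgK, hg, hx⟩
  exact ⟨b, g, (hg.iterate N).lipschitzWith_of_backwardContracting hθ hTN
    (lipschitzWith_birkhoffSum hf hT N) hgK, hg, hx⟩

end LipschitzEstimate

section KrylovBogoliubov

variable {X : Type*}

theorem birkhoffAverage_comp_self (T : X → X) (h : X → ℝ) (n : ℕ) (x : X) :
    birkhoffAverage ℝ T (h ∘ T) n x = birkhoffAverage ℝ T h n (T x) := by
  simp only [birkhoffAverage, birkhoffSum, Function.comp_apply, ← Function.iterate_succ_apply,
    ← Function.iterate_succ_apply']

variable [MeasurableSpace X]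

/-- The uniform probability measure on the orbit segment `x, T x, …, Tⁿ x`, counted with
multiplicity. It has `n + 1` points, so that no `n` is degenerate. -/
def empiricalMeasure (T : X → X) (n : ℕ) (x : X) : ProbabilityMeasure X :=
  ⟨((n + 1 : ℕ) : ℝ≥0∞)⁻¹ • ∑ i ∈ Finset.range (n + 1), Measure.dirac (T^[i] x), ⟨by
    simp [ENNReal.inv_mul_cancel]⟩⟩

theorem integral_empiricalMeasure (T : X → X) (n : ℕ) (x : X) {h : X → ℝ}
    (hh : StronglyMeasurable h) :
    ∫ y, h y ∂(empiricalMeasure T n x : Measure X) = birkhoffAverage ℝ T h (n + 1) x := by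
  rw [empiricalMeasure, ProbabilityMeasure.coe_mk, integral_smul_measure,
    integral_finsetSum_measure fun _ _ => integrable_dirac' hh (by simp)]
  simp only [integral_dirac' _ _ hh, ENNReal.toReal_inv, ENNReal.toReal_natCast, birkhoffAverage,
    birkhoffSum]

variable [TopologicalSpace X] [BorelSpace X] {T : X → X}

theorem tendsto_integral_comp_sub_integral_empiricalMeasure (hT : Continuous T)
    (h : BoundedContinuousFunction X ℝ) (x : ℕ → X) :
    Tendsto (fun n => ∫ y, h (T y) ∂(empiricalMeasure T n (x n) : Measure X) -
      ∫ y, h y ∂(empiricalMeasure T n (x n) : Measure X)) atTop (𝓝 0) := by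
  have hlim : Tendsto (fun n : ℕ => 2 * ‖h‖ / ((n + 1 : ℕ) : ℝ)) atTop (𝓝 0) :=
    (tendsto_const_div_atTop_nhds_zero_nat (2 * ‖h‖)).comp (tendsto_add_atTop_nat 1)
  refine squeeze_zero_norm (fun n => ?_) hlim
  have hcomp := integral_empiricalMeasure T n (x n) (h.continuous.comp hT).stronglyMeasurable
  rw [Function.comp_def] at hcomp
  rw [integral_empiricalMeasure T n (x n) h.continuous.stronglyMeasurable, hcomp,
    ← Function.comp_def, birkhoffAverage_comp_self, ← dist_eq_norm,
    dist_birkhoffAverage_apply_birkhoffAverage]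
  gcongr
  exact h.dist_le_two_norm _ _

theorem measurePreserving_of_tendsto_empiricalMeasure [HasOuterApproxClosed X] (hT : Continuous T)
    {l : Filter ℕ} [l.NeBot] (hl : l ≤ atTop) {x : ℕ → X} {μ : ProbabilityMeasure X}
    (hμ : Tendsto (fun n => empiricalMeasure T n (x n)) l (𝓝 μ)) :
    MeasurePreserving T (μ : Measure X) μ := by
  refine ⟨hT.measurable, ?_⟩
  have := Measure.isProbabilityMeasure_map (μ := (μ : Measure X)) hT.aemeasurable
  refine ext_of_forall_integral_eq_of_IsFiniteMeasure fun h => ?_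
  rw [integral_map hT.aemeasurable h.continuous.aestronglyMeasurable]
  have hlim := ProbabilityMeasure.tendsto_iff_forall_integral_tendsto.1 hμ
  have hdiff := (hlim (h.compContinuous ⟨T, hT⟩)).sub (hlim h)
  exact sub_eq_zero.1 (tendsto_nhds_unique hdiff
    ((tendsto_integral_comp_sub_integral_empiricalMeasure hT h x).mono_left hl))

theorem exists_measurePreserving_integral_eq [CompactSpace X] [T2Space X] [HasOuterApproxClosed X]
    (hT : Continuous T) (f : C(X, ℝ)) {x : ℕ → X} {b : ℝ}
    (hx : Tendsto (fun n => birkhoffAverage ℝ T f (n + 1) (x n)) atTop (𝓝 b)) :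
    ∃ μ : ProbabilityMeasure X,
      MeasurePreserving T (μ : Measure X) μ ∧ ∫ y, f y ∂(μ : Measure X) = b := by
  obtain ⟨μ, hμ⟩ := exists_clusterPt_of_compactSpace
    (map (fun n => empiricalMeasure T n (x n)) atTop)
  obtain ⟨U, hU, hUμ⟩ := mapClusterPt_iff_ultrafilter.1 hμ
  refine ⟨μ, measurePreserving_of_tendsto_empiricalMeasure hT hU hUμ, ?_⟩
  refine tendsto_nhds_unique (ProbabilityMeasure.tendsto_iff_forall_integral_tendsto.1 hUμ
    (.mkOfCompact f)) ((hx.mono_left hU).congr fun n => ?_)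
  exact (integral_empiricalMeasure T n (x n) f.continuous.stronglyMeasurable).symm

end KrylovBogoliubov

section MaximalAverage

variable {X : Type*} [TopologicalSpace X] [CompactSpace X] {T : X → X} {b : ℝ}

theorem integral_le_of_add_le_comp_add [MeasurableSpace X] [BorelSpace X] {μ : Measure X}
    [IsProbabilityMeasure μ] {f g : C(X, ℝ)} (hle : ∀ x, g x + f x ≤ g (T x) + b)
    (hT : MeasurePreserving T μ μ) : ∫ x, f x ∂μ ≤ b := by
  have hf : Integrable f μ := (BoundedContinuousFunction.mkOfCompact f).integrable μ
  have hg : Integrable g μ := (BoundedContinuousFunction.mkOfCompact g).integrable μ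
  have hgT : Integrable (fun x => g (T x)) μ := hT.integrable_comp_of_integrable hg
  have hinv : ∫ x, g (T x) ∂μ = ∫ x, g x ∂μ := by
    rw [← integral_map hT.aemeasurable (by rw [hT.map_eq]; exact hg.1), hT.map_eq]
  have hint := integral_mono (hg.add hf) (hgT.add (integrable_const b)) hle
  simp only [Pi.add_apply] at hint
  rw [integral_add hg hf, integral_add hgT (integrable_const b), hinv, integral_const,
    probReal_univ, one_smul] at hint
  linarith

theorem IsCalibratedWith.exists_tendsto_birkhoffAverage [Nonempty X] {f : X → ℝ} {g : C(X, ℝ)}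
    (h : IsCalibratedWith f T b g) :
    ∃ x : ℕ → X, Tendsto (fun n => birkhoffAverage ℝ T f (n + 1) (x n)) atTop (𝓝 b) := by
  inhabit X
  choose y _ hy using fun n : ℕ => (h.iterate (n + 1)).exists_preimage default
  have hlim : Tendsto (fun n : ℕ => 2 * ‖g‖ / ((n + 1 : ℕ) : ℝ)) atTop (𝓝 0) :=
    (tendsto_const_div_atTop_nhds_zero_nat (2 * ‖g‖)).comp (tendsto_add_atTop_nat 1)
  refine ⟨y, tendsto_iff_dist_tendsto_zero.2 (squeeze_zero (fun _ => dist_nonneg) (fun n => ?_)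
    hlim)⟩
  have havg : birkhoffAverage ℝ T f (n + 1) (y n) - b = (g default - g (y n)) / (n + 1 : ℕ) := by
    rw [birkhoffAverage, smul_eq_mul]
    field_simp
    linarith [hy n]
  rw [Real.dist_eq, havg, abs_div, Nat.abs_cast, ← Real.dist_eq]
  gcongr
  exact g.dist_le_two_norm _ _

theorem IsCalibratedWith.beta_eq {f g : C(Circle1, ℝ)} {T : Circle1 → Circle1}
    (h : IsCalibratedWith f T b g) (hT : Continuous T) : beta f T = b := by
  refine IsGreatest.csSup_eq ⟨?_, ?_⟩
  · obtain ⟨x, hx⟩ := h.exists_tendsto_birkhoffAverage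
    obtain ⟨μ, hμT, hμ⟩ := exists_measurePreserving_integral_eq hT f hx
    exact ⟨μ, ⟨inferInstance, hμT.map_eq⟩, hμ⟩
  · rintro _ ⟨μ, ⟨_, hμ⟩, rfl⟩
    exact integral_le_of_add_le_comp_add h.le ⟨hT.measurable, hμ⟩

theorem Kset_eq_iUnion_lipschitzCore {f : C(Circle1, ℝ)} {T : Circle1 → Circle1}
    (hT : Continuous T) : Kset f T = ⋃ C : ℝ≥0, lipschitzCore C f T := by
  ext x
  simp only [Kset, mem_iUnion, exists_prop]
  constructor
  · rintro ⟨g, ⟨⟨C, hC⟩, ⟨-, hle⟩, hpre⟩, hx⟩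
    exact ⟨C, beta f T, g, hC, ⟨hle, hpre⟩, hx⟩
  · rintro ⟨C, b, g, hC, hg, hx⟩
    obtain rfl := IsCalibratedWith.beta_eq (g := ⟨g, hC.continuous⟩) hg hT
    exact ⟨g, ⟨⟨C, hC⟩, ⟨hC.continuous, hg.le⟩, hg.exists_preimage⟩, hx⟩

end MaximalAverage

section Closedness

variable {P X : Type*} [TopologicalSpace P] [TopologicalSpace X]

theorem isClosed_setOfPred_forall {ι : Type*} {r : ι → P → Prop}
    (hr : ∀ i, IsClosed {p | r i p}) : IsClosed {p | ∀ i, r i p} := by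
  rw [ofPred_forall]
  exact isClosed_iInter hr

theorem isClosed_setOfPred_exists [CompactSpace X] {r : P → X → Prop}
    (hr : IsClosed {q : P × X | r q.1 q.2}) : IsClosed {p | ∃ x, r p x} := by
  convert isClosedMap_fst_of_compactSpace _ hr
  ext p
  simp

@[fun_prop]
theorem continuous_iterate_apply [LocallyCompactSpace X] {T : P → C(X, X)} {x : P → X}
    (hT : Continuous T) (hx : Continuous x) (n : ℕ) : Continuous fun p => (T p)^[n] (x p) := by
  induction n with
  | zero => exact hx
  | succ n ih =>
    simp only [Function.iterate_succ_apply']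
    fun_prop

variable [CompactSpace X] [T2Space X] {f : P → C(X, ℝ)} {T : P → C(X, X)} {b : P → ℝ}
  {g : P → C(X, ℝ)}

theorem isClosed_setOfPred_isCalibratedWith (hf : Continuous f) (hT : Continuous T)
    (hb : Continuous b) (hg : Continuous g) :
    IsClosed {p | IsCalibratedWith (f p) (T p) (b p) (g p)} := by
  have hle : IsClosed {p | ∀ x, g p x + f p x ≤ g p (T p x) + b p} :=
    isClosed_setOfPred_forall fun x => isClosed_le (by fun_prop) (by fun_prop)
  have hpre : IsClosed {p | ∀ x, ∃ y, T p y = x ∧ g p y + f p y = g p x + b p} :=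
    isClosed_setOfPred_forall fun x => isClosed_setOfPred_exists <|
      (isClosed_eq (by fun_prop) (by fun_prop)).inter (isClosed_eq (by fun_prop) (by fun_prop))
  convert hle.inter hpre using 1
  ext p
  exact ⟨fun h => ⟨h.le, h.exists_preimage⟩, fun h => ⟨h.1, h.2⟩⟩

theorem isClosed_setOfPred_mem_calibratedCore {x : P → X} (hf : Continuous f) (hT : Continuous T)
    (hb : Continuous b) (hg : Continuous g) (hx : Continuous x) :
    IsClosed {p | x p ∈ calibratedCore (f p) (T p) (b p) (g p)} := by
  simp only [calibratedCore, mem_iInter]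
  refine isClosed_setOfPred_forall fun n => isClosed_setOfPred_exists <| .inter ?_ ?_
  · exact isClosed_setOfPred_forall fun m => isClosed_eq (by fun_prop) (by fun_prop)
  · exact isClosed_eq (by fun_prop) (by fun_prop)

end Closedness

section Limit

theorem isCompact_setOfPred_lipschitzWith_of_apply_eq_zero {X : Type*} [PseudoMetricSpace X]
    [CompactSpace X] (C : ℝ≥0) (x₀ : X) :
    IsCompact {g : C(X, ℝ) | LipschitzWith C g ∧ g x₀ = 0} := by
  refine ArzelaAscoli.isCompact_of_equicontinuous _ ?_
    (LipschitzWith.uniformEquicontinuous _ C fun g => g.2.1).equicontinuous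
  have himage : ContinuousMap.toFun '' {g : C(X, ℝ) | LipschitzWith C g ∧ g x₀ = 0} =
      {g : X → ℝ | LipschitzWith C g} ∩ {g | g x₀ = 0} := by
    ext g
    exact ⟨by rintro ⟨g, hg, rfl⟩; exact hg, fun hg => ⟨⟨g, hg.1.continuous⟩, hg, rfl⟩⟩
  have hbox : IsCompact (univ.pi fun x : X => Icc (-(C * dist x x₀)) (C * dist x x₀)) :=
    isCompact_univ_pi fun _ => isCompact_Icc
  rw [himage]
  refine hbox.of_isClosed_subset ((isClosed_setOfPred_lipschitzWith C).inter
    (isClosed_eq (continuous_apply x₀) continuous_const)) fun g hg x _ => ?_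
  have hdist := hg.1.dist_le_mul x x₀
  rw [hg.2, Real.dist_0_eq_abs] at hdist
  exact abs_le.1 hdist

variable {X : Type*} [MetricSpace X] [CompactSpace X] [Nonempty X]

theorem isClosed_setOfPred_mem_lipschitzCore (R : ℝ) (C : ℝ≥0) :
    IsClosed {p : C(X, ℝ) × C(X, X) × X | ‖p.1‖ ≤ R ∧ p.2.2 ∈ lipschitzCore C p.1 p.2.1} := by
  inhabit X
  let N := Icc (-R) R ×ˢ {g : C(X, ℝ) | LipschitzWith C g ∧ g default = 0}
  have hN : CompactSpace N := isCompact_iff_compactSpace.1 <|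
    isCompact_Icc.prod (isCompact_setOfPred_lipschitzWith_of_apply_eq_zero C default)
  have hnormalise : {p : C(X, ℝ) × C(X, X) × X | ‖p.1‖ ≤ R ∧ p.2.2 ∈ lipschitzCore C p.1 p.2.1} =
      {p | ‖p.1‖ ≤ R} ∩ {p | ∃ y : N, IsCalibratedWith p.1 p.2.1 y.1.1 y.1.2 ∧
        p.2.2 ∈ calibratedCore p.1 p.2.1 y.1.1 y.1.2} := by
    ext ⟨f, T, x⟩
    refine and_congr_right fun hf => ⟨?_, ?_⟩
    · rintro ⟨b, g, hgC, hg, hx⟩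
      have hgC' : LipschitzWith C fun x => g x - g default := by
        simpa using hgC.sub (.const (g default))
      have hg' := hg.sub_const (g default)
      refine ⟨⟨(b, ⟨_, hgC'.continuous⟩), ?_, hgC', sub_self _⟩, hg', ?_⟩
      · exact abs_le.1 ((hg'.abs_le_norm (g := ⟨_, hgC'.continuous⟩)).trans hf)
      · exact (calibratedCore_sub_const f T b g _).symm ▸ hx
    · rintro ⟨⟨⟨b, g⟩, _, hgC, _⟩, hg, hx⟩
      exact ⟨b, g, hgC, hg, hx⟩
  rw [hnormalise]
  refine (isClosed_le (by fun_prop) (by fun_prop)).inter (isClosed_setOfPred_exists (.inter ?_ ?_))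
  · exact isClosed_setOfPred_isCalibratedWith (by fun_prop) (by fun_prop) (by fun_prop)
      (by fun_prop)
  · exact isClosed_setOfPred_mem_calibratedCore (by fun_prop) (by fun_prop) (by fun_prop)
      (by fun_prop) (by fun_prop)

theorem mem_lipschitzCore_of_tendsto {ι : Type*} {l : Filter ι} [l.NeBot]
    {f : ι → C(X, ℝ)} {f₀ : C(X, ℝ)} {T : ι → C(X, X)} {T₀ : C(X, X)} {x : ι → X} {x₀ : X}
    {C : ℝ≥0} (hf : Tendsto f l (𝓝 f₀)) (hT : Tendsto T l (𝓝 T₀)) (hx : Tendsto x l (𝓝 x₀))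
    (hmem : ∀ᶠ i in l, x i ∈ lipschitzCore C (f i) (T i)) : x₀ ∈ lipschitzCore C f₀ T₀ := by
  have hbound : ∀ᶠ i in l, ‖f i‖ ≤ ‖f₀‖ + 1 :=
    hf.norm.eventually (eventually_le_nhds (lt_add_one _))
  exact ((isClosed_setOfPred_mem_lipschitzCore (‖f₀‖ + 1) C).mem_of_tendsto
    (hf.prodMk_nhds (hT.prodMk_nhds hx)) (hbound.and hmem)).2

end Limit

section Lifts

variable {p : ℝ}

theorem lipschitzWith_addCircle_coe : LipschitzWith 1 ((↑) : ℝ → AddCircle p) :=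
  LipschitzWith.of_dist_le_mul fun s t => by
    rw [NNReal.coe_one, one_mul, dist_eq_norm, dist_eq_norm, ← AddCircle.coe_sub]
    exact QuotientAddGroup.norm_mk_le_norm

theorem exists_addCircle_coe_eq_and_dist_eq (s : ℝ) (y : AddCircle p) :
    ∃ t : ℝ, (t : AddCircle p) = y ∧ dist s t = dist (s : AddCircle p) y := by
  obtain ⟨t, rfl⟩ := QuotientAddGroup.mk_surjective y
  refine ⟨t + round (p⁻¹ * (s - t)) * p, ?_, ?_⟩
  · rw [AddCircle.coe_add, ← zsmul_eq_mul, AddCircle.coe_zsmul, AddCircle.coe_period, zsmul_zero,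
      add_zero]
  · rw [dist_eq_norm (s : AddCircle p), ← AddCircle.coe_sub, AddCircle.norm_eq, Real.dist_eq,
      sub_sub]

theorem lipschitzWith_of_comp_addCircle_coe {Y : Type*} [PseudoMetricSpace Y] {C : ℝ≥0}
    {φ : AddCircle p → Y} (h : LipschitzWith C fun t : ℝ => φ t) : LipschitzWith C φ := by
  refine LipschitzWith.of_dist_le_mul fun x y => ?_
  obtain ⟨s, rfl⟩ := QuotientAddGroup.mk_surjective x
  obtain ⟨t, rfl, hst⟩ := exists_addCircle_coe_eq_and_dist_eq s y
  exact (h.dist_le_mul s t).trans_eq (by rw [hst])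

theorem continuous_of_comp_addCircle_coe {Y : Type*} [TopologicalSpace Y]
    {φ : AddCircle p → Y} (h : Continuous fun t : ℝ => φ t) : Continuous φ :=
  continuous_coinduced_dom.2 h

theorem tendsto_of_tendstoUniformly_comp_addCircle_coe [Fact (0 < p)] {ι Y : Type*}
    [UniformSpace Y] {l : Filter ι} {φ : ι → C(AddCircle p, Y)} {φ₀ : C(AddCircle p, Y)}
    (h : TendstoUniformly (fun i (t : ℝ) => φ i t) (fun t => φ₀ t) l) : Tendsto φ l (𝓝 φ₀) := by
  refine ContinuousMap.tendsto_iff_tendstoUniformly.2 fun u hu => (h u hu).mono fun i hi x => ?_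
  obtain ⟨t, rfl⟩ := QuotientAddGroup.mk_surjective x
  exact hi t

theorem backwardContracting_of_semiconj {H : ℝ → ℝ} {S : AddCircle p → AddCircle p} {K : ℝ≥0}
    (hS : Function.Semiconj ((↑) : ℝ → AddCircle p) H S) (hK : AntilipschitzWith K H)
    (hsurj : Function.Surjective H) : BackwardContracting K S := by
  intro x y
  obtain ⟨s, rfl⟩ := QuotientAddGroup.mk_surjective x
  obtain ⟨t, rfl, hst⟩ := exists_addCircle_coe_eq_and_dist_eq (H s) y
  obtain ⟨u, rfl⟩ := hsurj t
  refine ⟨u, (hS u).symm, ?_⟩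
  calc dist (s : AddCircle p) u ≤ dist s u := by
        simpa using lipschitzWith_addCircle_coe.dist_le_mul s u
    _ ≤ K * dist (H s) (H u) := hK.le_mul_dist s u
    _ = K * dist (S s) (H u) := by rw [hst, hS s]

end Lifts

section RealLine

variable {H : ℝ → ℝ} {c : ℝ≥0}

theorem antilipschitzWith_of_le_abs_deriv (hc : 0 < c) (hH : Differentiable ℝ H)
    (hd : ∀ x, c ≤ |deriv H x|) : AntilipschitzWith c⁻¹ H := by
  refine AntilipschitzWith.of_le_mul_dist fun s t => ?_
  wlog hst : s < t generalizing s t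
  · rcases eq_or_lt_of_not_gt hst with h | h
    · simp [h]
    · rw [dist_comm s, dist_comm (H s)]
      exact this t s h
  obtain ⟨a, -, ha⟩ := exists_deriv_eq_slope H hst hH.continuous.continuousOn
    hH.differentiableOn
  have hle := hd a
  rw [ha, abs_div, ← Real.dist_eq, ← Real.dist_eq, le_div_iff₀ (dist_pos.2 hst.ne')] at hle
  rw [NNReal.coe_inv, dist_comm s, dist_comm (H s), le_inv_mul_iff₀ (by exact_mod_cast hc)]
  exact hle

theorem surjective_of_le_abs_deriv (hc : 0 < c) (hH : ContDiff ℝ 1 H)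
    (hd : ∀ x, c ≤ |deriv H x|) : Function.Surjective H := by
  have hanti := antilipschitzWith_of_le_abs_deriv hc (hH.differentiable one_ne_zero) hd
  have hopen : IsOpenMap H := isOpenMap_of_hasStrictDerivAt (f' := deriv H)
    (fun x => hH.contDiffAt.hasStrictDerivAt one_ne_zero)
    fun x => abs_pos.1 ((NNReal.coe_pos.2 hc).trans_le (hd x))
  have hproper : IsProperMap H := by
    refine isProperMap_iff_tendsto_cocompact.2 ⟨hH.continuous, ?_⟩
    simpa only [Metric.cobounded_eq_cocompact] using hanti.tendsto_cobounded
  have hclopen : IsClopen (range H) := ⟨hproper.isClosedMap.isClosed_range, hopen.isOpen_range⟩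
  exact range_eq_univ.1 (hclopen.eq_univ (range_nonempty H))

theorem deriv_iterate_eq_prod (hH : Differentiable ℝ H) (n : ℕ) (a : ℝ) :
    deriv H^[n] a = ∏ k ∈ Finset.range n, deriv H (H^[k] a) := by
  induction n with
  | zero => simp
  | succ n ih =>
    rw [Function.iterate_succ', deriv_comp a hH.differentiableAt (hH.iterate n).differentiableAt,
      ih, Finset.prod_range_succ_comm]

theorem contDiff_iterate {n : WithTop ℕ∞} (hH : ContDiff ℝ n H) (N : ℕ) :
    ContDiff ℝ n H^[N] := by
  induction N with
  | zero => exact contDiff_id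
  | succ N ih => exact ih.comp hH

end RealLine

section SmoothLifts

theorem semiconj_cmap {F : ℝ → ℝ} {d : ℤ} (hF : ∀ x, F (x + 1) = F x + d) :
    Function.Semiconj ((↑) : ℝ → Circle1) F (cmap F) := by
  have hper : Function.Periodic (fun t => (F t : Circle1)) 1 := fun t => by
    simp only [hF]
    rw [AddCircle.coe_add, ← zsmul_one, AddCircle.coe_zsmul, AddCircle.coe_period, zsmul_zero,
      add_zero]
  intro t
  exact congrArg hper.lift (AddCircle.coe_equivIco (p := 1) (a := 0) (y := t)).symm

theorem periodic_deriv_of_apply_add_one {H : ℝ → ℝ} {c : ℝ} (hH : ∀ x, H (x + 1) = H x + c) :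
    Function.Periodic (deriv H) 1 := fun x => by
  rw [← deriv_comp_add_const, funext hH, deriv_add_const]

/-- The derivative of a lift, as a continuous function on the circle. -/
def circleDeriv (H : ℝ → ℝ) (hH : ContDiff ℝ 1 H) (hper : Function.Periodic (deriv H) 1) :
    C(Circle1, ℝ) :=
  ⟨hper.lift, continuous_of_comp_addCircle_coe (hH.continuous_deriv le_rfl)⟩

theorem lipschitzWith_nnnorm_circleDeriv {H : ℝ → ℝ} (hH : ContDiff ℝ 1 H)
    (hper : Function.Periodic (deriv H) 1) : LipschitzWith ‖circleDeriv H hH hper‖₊ H :=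
  lipschitzWith_of_nnnorm_deriv_le (hH.differentiable one_ne_zero) fun x =>
    (circleDeriv H hH hper).norm_coe_le_norm x

variable {ι : Type*} {l : Filter ι} {r : ℕ∞} {H : ι → ℝ → ℝ} {H₀ : ℝ → ℝ}

theorem tendstoUniformly_iteratedDeriv_of_tendsto_crSeq {k : ℕ} (hk : k ≤ r)
    (h : Tendsto (fun i => crSeq r (H i)) l (𝓝 (crSeq r H₀))) :
    TendstoUniformly (fun i => iteratedDeriv k (H i)) (iteratedDeriv k H₀) l := by
  have hk' := UniformFun.tendsto_iff_tendstoUniformly.1 (tendsto_pi_nhds.1 h k)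
  simp only [crSeq, if_pos hk] at hk'
  exact hk'

theorem tendstoUniformly_of_tendsto_crSeq_s5
    (h : Tendsto (fun i => crSeq r (H i)) l (𝓝 (crSeq r H₀))) : TendstoUniformly H H₀ l := by
  simpa only [iteratedDeriv_zero] using
    tendstoUniformly_iteratedDeriv_of_tendsto_crSeq (k := 0) bot_le h

theorem tendstoUniformly_deriv_of_tendsto_crSeq (hr : 1 ≤ r)
    (h : Tendsto (fun i => crSeq r (H i)) l (𝓝 (crSeq r H₀))) :
    TendstoUniformly (fun i => deriv (H i)) (deriv H₀) l := by
  simpa only [iteratedDeriv_one] using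
    tendstoUniformly_iteratedDeriv_of_tendsto_crSeq (k := 1) hr h

theorem tendsto_circleDeriv_of_tendsto_crSeq (hr : 1 ≤ r)
    (hH : ∀ i, ContDiff ℝ 1 (H i)) (hH₀ : ContDiff ℝ 1 H₀)
    (hper : ∀ i, Function.Periodic (deriv (H i)) 1) (hper₀ : Function.Periodic (deriv H₀) 1)
    (h : Tendsto (fun i => crSeq r (H i)) l (𝓝 (crSeq r H₀))) :
    Tendsto (fun i => circleDeriv (H i) (hH i) (hper i)) l (𝓝 (circleDeriv H₀ hH₀ hper₀)) :=
  tendsto_of_tendstoUniformly_comp_addCircle_coe (tendstoUniformly_deriv_of_tendsto_crSeq hr h)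

theorem exists_eventually_lipschitzWith_of_tendsto_crSeq (hr : 1 ≤ r)
    (hH : ∀ i, ContDiff ℝ 1 (H i)) (hH₀ : ContDiff ℝ 1 H₀)
    (hper : ∀ i, Function.Periodic (deriv (H i)) 1) (hper₀ : Function.Periodic (deriv H₀) 1)
    (h : Tendsto (fun i => crSeq r (H i)) l (𝓝 (crSeq r H₀))) :
    ∃ A : ℝ≥0, ∀ᶠ i in l, LipschitzWith A (H i) := by
  have hlim := tendsto_circleDeriv_of_tendsto_crSeq hr hH hH₀ hper hper₀ h
  refine ⟨‖circleDeriv H₀ hH₀ hper₀‖₊ + 1, ?_⟩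
  filter_upwards [hlim.nnnorm.eventually (eventually_le_nhds (lt_add_one _))] with i hi
  exact (lipschitzWith_nnnorm_circleDeriv (hH i) (hper i)).weaken hi

end SmoothLifts

namespace CrFun

variable {ι : Type*} {l : Filter ι} {r : ℕ∞}

theorem tendsto_crSeq {f : ι → CrFun r} {f₀ : CrFun r} (h : Tendsto f l (𝓝 f₀)) :
    Tendsto (fun i => crSeq r fun x : ℝ => (f i).1 x) l (𝓝 (crSeq r fun x : ℝ => f₀.1 x)) :=
  (continuous_induced_dom.tendsto f₀).comp h

/-- The inclusion of `𝓒^r` into the space of continuous functions on the circle. -/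
def toContinuousMap_s5 (f : CrFun r) : C(Circle1, ℝ) :=
  ⟨f.1, continuous_of_comp_addCircle_coe f.2.continuous⟩

theorem continuous_toContinuousMap_s5 :
    Continuous (toContinuousMap_s5 : CrFun r → C(Circle1, ℝ)) :=
  continuous_iff_continuousAt.2 fun _ => tendsto_of_tendstoUniformly_comp_addCircle_coe <|
    tendstoUniformly_of_tendsto_crSeq_s5 (tendsto_crSeq tendsto_id)

theorem exists_eventually_lipschitzWith {f : ι → CrFun r} {f₀ : CrFun r} (hr : 1 ≤ r)
    (h : Tendsto f l (𝓝 f₀)) : ∃ A : ℝ≥0, ∀ᶠ i in l, LipschitzWith A (f i).1 := by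
  have hsmooth (f : CrFun r) : ContDiff ℝ 1 fun x : ℝ => f.1 x :=
    f.2.of_le (by exact_mod_cast hr)
  have hper (f : CrFun r) : Function.Periodic (deriv fun x : ℝ => f.1 x) 1 :=
    periodic_deriv_of_apply_add_one (c := 0) fun x => by
      rw [AddCircle.coe_add, AddCircle.coe_period]
      simp only [add_zero]
  obtain ⟨A, hA⟩ := exists_eventually_lipschitzWith_of_tendsto_crSeq hr (fun i => hsmooth (f i))
    (hsmooth f₀) (fun i => hper (f i)) (hper f₀) (tendsto_crSeq h)
  exact ⟨A, hA.mono fun _ => lipschitzWith_of_comp_addCircle_coe⟩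

end CrFun

theorem isOpen_setOfPred_lt_abs_prod_iterate {X : Type*} [TopologicalSpace X] [CompactSpace X]
    [LocallyCompactSpace X] (c : ℝ) (N : ℕ) :
    IsOpen {p : C(X, ℝ) × C(X, X) | ∀ x, c < |∏ k ∈ Finset.range N, p.1 (p.2^[k] x)|} := by
  rw [← isClosed_compl_iff]
  convert isClosed_setOfPred_exists
    (r := fun (p : C(X, ℝ) × C(X, X)) x => |∏ k ∈ Finset.range N, p.1 (p.2^[k] x)| ≤ c)
    (isClosed_le (by fun_prop) continuous_const) using 1
  ext p
  simp

namespace ExpMap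

variable {ι : Type*} {l : Filter ι} {r : ℕ∞}

theorem tendsto_crSeq {F : ι → ExpMap r} {F₀ : ExpMap r} (h : Tendsto F l (𝓝 F₀)) :
    Tendsto (fun i => crSeq r (F i).1) l (𝓝 (crSeq r F₀.1)) :=
  (continuous_induced_dom.tendsto F₀).comp h

theorem semiconj (F : ExpMap r) : Function.Semiconj ((↑) : ℝ → Circle1) F.1 (cmap F.1) := by
  obtain ⟨d, hd⟩ := F.2.2.1
  exact semiconj_cmap hd

theorem periodic_deriv (F : ExpMap r) : Function.Periodic (deriv F.1) 1 := by
  obtain ⟨d, hd⟩ := F.2.2.1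
  exact periodic_deriv_of_apply_add_one hd

theorem contDiff_one (F : ExpMap r) (hr : 1 ≤ r) : ContDiff ℝ 1 F.1 :=
  F.2.1.of_le (by exact_mod_cast hr)

/-- The circle map with lift `F`, as a continuous map. -/
def toContinuousMap_s5 (F : ExpMap r) : C(Circle1, Circle1) :=
  ⟨cmap F.1, continuous_of_comp_addCircle_coe <|
    (lipschitzWith_addCircle_coe.continuous.comp F.2.1.continuous).congr F.semiconj⟩

theorem continuous_toContinuousMap_s5 :
    Continuous (toContinuousMap_s5 : ExpMap r → C(Circle1, Circle1)) := by
  refine continuous_iff_continuousAt.2 fun F₀ => tendsto_of_tendstoUniformly_comp_addCircle_coe ?_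
  simp only [toContinuousMap_s5, ContinuousMap.coe_mk, ← (semiconj _ _)]
  exact lipschitzWith_addCircle_coe.uniformContinuous.comp_tendstoUniformly
    (tendstoUniformly_of_tendsto_crSeq_s5 (tendsto_crSeq tendsto_id))

theorem exists_eventually_lipschitzWith {F : ι → ExpMap r} {F₀ : ExpMap r} (hr : 1 ≤ r)
    (h : Tendsto F l (𝓝 F₀)) : ∃ M : ℝ≥0, ∀ᶠ i in l, LipschitzWith M (cmap (F i).1) := by
  obtain ⟨M, hM⟩ := exists_eventually_lipschitzWith_of_tendsto_crSeq hr
    (fun i => (F i).contDiff_one hr) (F₀.contDiff_one hr) (fun i => (F i).periodic_deriv)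
    F₀.periodic_deriv (tendsto_crSeq h)
  refine ⟨M, hM.mono fun i hi => lipschitzWith_of_comp_addCircle_coe ?_⟩
  have hcoe := (lipschitzWith_addCircle_coe (p := 1)).comp hi
  rwa [one_mul, (F i).semiconj.comp_eq] at hcoe

theorem exists_lt_abs_deriv_iterate (F : ExpMap r) (c : ℝ) :
    ∃ N, ∀ a, c < |deriv F.1^[N] a| := by
  obtain ⟨-, -, C, hC, lam, hlam, hexp⟩ := F.2
  obtain ⟨N, hN, hN1⟩ := ((((tendsto_pow_atTop_atTop_of_one_lt hlam).const_mul_atTop hC).eventually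
    (eventually_gt_atTop c)).and (eventually_ge_atTop 1)).exists
  exact ⟨N, fun a => hN.trans_le (hexp N hN1 a)⟩

/-- The derivative of the circle map with lift `F`, as a continuous function. -/
def derivMap (F : ExpMap r) (hr : 1 ≤ r) : C(Circle1, ℝ) :=
  circleDeriv F.1 (F.contDiff_one hr) F.periodic_deriv

theorem deriv_iterate_eq_prod_derivMap (F : ExpMap r) (hr : 1 ≤ r) (N : ℕ) (a : ℝ) :
    deriv F.1^[N] a = ∏ k ∈ Finset.range N, F.derivMap hr (F.toContinuousMap_s5^[k] a) := by
  rw [deriv_iterate_eq_prod ((F.contDiff_one hr).differentiable one_ne_zero)]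
  refine Finset.prod_congr rfl fun k _ => ?_
  change _ = F.derivMap hr ((cmap F.1)^[k] a)
  rw [← F.semiconj.iterate_right k a]
  rfl

theorem eventually_forall_lt_abs_deriv_iterate {F : ι → ExpMap r} {F₀ : ExpMap r} (hr : 1 ≤ r)
    (h : Tendsto F l (𝓝 F₀)) {c : ℝ} {N : ℕ} (hN : ∀ a, c < |deriv F₀.1^[N] a|) :
    ∀ᶠ i in l, ∀ a, c < |deriv (F i).1^[N] a| := by
  have hlim : Tendsto (fun i => ((F i).derivMap hr, (F i).toContinuousMap_s5)) l
      (𝓝 (F₀.derivMap hr, F₀.toContinuousMap_s5)) :=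
    (tendsto_circleDeriv_of_tendsto_crSeq hr _ _ _ _ (tendsto_crSeq h)).prodMk_nhds
      ((continuous_toContinuousMap_s5.tendsto F₀).comp h)
  have hmem : ∀ x, c < |∏ k ∈ Finset.range N, F₀.derivMap hr (F₀.toContinuousMap_s5^[k] x)| := by
    rintro ⟨a⟩
    exact (hN a).trans_eq (by rw [F₀.deriv_iterate_eq_prod_derivMap hr]; rfl)
  filter_upwards [hlim.eventually
    ((isOpen_setOfPred_lt_abs_prod_iterate c N).mem_nhds hmem)] with i hi a
  rw [deriv_iterate_eq_prod_derivMap _ hr]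
  exact hi a

theorem backwardContracting_iterate (F : ExpMap r) (hr : 1 ≤ r) {c : ℝ≥0} (hc : 0 < c) {N : ℕ}
    (hN : ∀ a, c ≤ |deriv F.1^[N] a|) : BackwardContracting c⁻¹ (cmap F.1)^[N] := by
  have hsmooth := contDiff_iterate (F.contDiff_one hr) N
  exact backwardContracting_of_semiconj (F.semiconj.iterate_right N)
    (antilipschitzWith_of_le_abs_deriv hc (hsmooth.differentiable one_ne_zero) hN)
    (surjective_of_le_abs_deriv hc hsmooth hN)

theorem exists_eventually_backwardContracting {F : ι → ExpMap r} {F₀ : ExpMap r} (hr : 1 ≤ r)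
    (h : Tendsto F l (𝓝 F₀)) {θ : ℝ≥0} (hθ : 0 < θ) :
    ∃ N, ∀ᶠ i in l, BackwardContracting θ (cmap (F i).1)^[N] := by
  obtain ⟨N, hN⟩ := F₀.exists_lt_abs_deriv_iterate ↑θ⁻¹
  refine ⟨N, (eventually_forall_lt_abs_deriv_iterate hr h hN).mono fun i hi => ?_⟩
  simpa only [inv_inv] using
    (F i).backwardContracting_iterate hr (inv_pos.2 hθ) fun a => (hi a).le

end ExpMap

theorem Kset_usc_general {ι : Type*} {l : Filter ι} [l.NeBot] {f : ι → C(Circle1, ℝ)}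
    {f₀ : C(Circle1, ℝ)} {T : ι → C(Circle1, Circle1)} {T₀ : C(Circle1, Circle1)}
    {x : ι → Circle1} {x₀ : Circle1} {L M θ : ℝ≥0} {N : ℕ} (hf : Tendsto f l (𝓝 f₀))
    (hfL : ∀ᶠ i in l, LipschitzWith L (f i)) (hT : Tendsto T l (𝓝 T₀))
    (hTM : ∀ᶠ i in l, LipschitzWith M (T i)) (hθ : θ < 1)
    (hTN : ∀ᶠ i in l, BackwardContracting θ (T i)^[N]) (hx : Tendsto x l (𝓝 x₀))
    (hmem : ∀ᶠ i in l, x i ∈ Kset (f i) (T i)) : x₀ ∈ Kset f₀ T₀ := by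
  rw [Kset_eq_iUnion_lipschitzCore T₀.continuous]
  refine mem_iUnion_of_mem (θ * (∑ k ∈ Finset.range N, L * M ^ k) / (1 - θ))
    (mem_lipschitzCore_of_tendsto hf hT hx ?_)
  filter_upwards [hfL, hTM, hTN, hmem] with i hfi hTi hTNi hxi
  rw [Kset_eq_iUnion_lipschitzCore (T i).continuous] at hxi
  obtain ⟨C, hC⟩ := mem_iUnion.1 hxi
  exact lipschitzCore_subset hfi hTi hθ hTNi hC

end

/-- Proposition 2.1(iii): `(f,T) ↦ K(f,T)` is upper semi-continuous on `𝓒^1 × 𝓔^1`. -/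
theorem Kset_usc (seq : ℕ → CrFun 1 × ExpMap 1) (lim : CrFun 1 × ExpMap 1)
    (hconv : Tendsto seq atTop (𝓝 lim)) (x : ℕ → Circle1) (x0 : Circle1)
    (hx : ∀ n, x n ∈ Kset (seq n).1.1 (cmap (seq n).2.1))
    (hxc : Tendsto x atTop (𝓝 x0)) :
    x0 ∈ Kset lim.1.1 (cmap lim.2.1) := by
  obtain ⟨L, hL⟩ := CrFun.exists_eventually_lipschitzWith le_rfl hconv.fst_nhds
  obtain ⟨M, hM⟩ := ExpMap.exists_eventually_lipschitzWith le_rfl hconv.snd_nhds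
  obtain ⟨N, hN⟩ := ExpMap.exists_eventually_backwardContracting le_rfl hconv.snd_nhds
    (inv_pos.2 (two_pos (α := ℝ≥0)))
  exact Kset_usc_general (f := fun n => (seq n).1.toContinuousMap_s5) (f₀ := lim.1.toContinuousMap_s5)
    (T := fun n => (seq n).2.toContinuousMap_s5) (T₀ := lim.2.toContinuousMap_s5)
    ((CrFun.continuous_toContinuousMap_s5.tendsto _).comp hconv.fst_nhds) hL
    ((ExpMap.continuous_toContinuousMap_s5.tendsto _).comp hconv.snd_nhds) hM
    (inv_lt_one_of_one_lt₀ one_lt_two) hN hxc (.of_forall hx)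
end
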